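/- arXiv:2102.04711 — 2 statements merged into one kernel-verified Lean document; each statement's English description precedes it below -/
import Mathlib

section
/- Let R be an integral domain with fraction field K, let v be a valuation on K nonnegative on R, and let I be a proper ideal of R such that I^n is a v-ideal of R for every positive integer n. Then the intersection ⋂_{n=1}^∞ I^n is a prime ideal of R. -/
/-- For a valuation `v` on `K` which is nonnegative on a subring `R` (in multiplicative
notation: `v (algebraMap R K r) ≤ 1` for all `r`), the canonical ring homomorphism from
`R` into the valuation ring `{x : K | v x ≤ 1}` of `v`. -/
def Valuation.nonnegHom {R K Γ₀ : Type*} [CommRing R] [Field K] [Algebra R K]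
    [LinearOrderedCommGroupWithZero Γ₀] (v : Valuation K Γ₀)
    (hv : ∀ r : R, v (algebraMap R K r) ≤ 1) : R →+* v.integer where
  toFun r := ⟨algebraMap R K r, hv r⟩
  map_one' := by ext; simp
  map_mul' x y := by ext; simp
  map_zero' := by ext; simp
  map_add' x y := by ext; simp

/-- An ideal `I` of `R` is a `v`-ideal if it is the contraction of some ideal of the
valuation ring of `v`. -/
def IsVIdeal {R K Γ₀ : Type*} [CommRing R] [Field K] [Algebra R K]
    [LinearOrderedCommGroupWithZero Γ₀] (v : Valuation K Γ₀)
    (hv : ∀ r : R, v (algebraMap R K r) ≤ 1) (I : Ideal R) : Prop :=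
  ∃ J : Ideal v.integer, I = J.comap (Valuation.nonnegHom v hv)

/-!
If `𝔞` and `𝔟` are `v`-ideals, `a ∉ 𝔞` and `b ∉ 𝔟`, then every element of `𝔞` has larger
(additive) value than `a`, and every element of `𝔟` larger value than `b`. Hence all elements of
`𝔞𝔟` have value strictly larger than `v(ab)`, and `ab ∉ 𝔞𝔟`. For powers of `I` this says that
`a ∉ Iᵐ` and `b ∉ Iⁿ` imply `ab ∉ Iᵐ⁺ⁿ`.
-/

section Valuation

variable {R Γ₀ : Type*} [CommRing R] [LinearOrderedCommGroupWithZero Γ₀]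

theorem valuation_lt_mul_of_mem_mul {w : Valuation R Γ₀} {I J : Ideal R} {γ δ : Γ₀}
    (hI : ∀ x ∈ I, w x < γ) (hJ : ∀ y ∈ J, w y < δ) {z : R} (hz : z ∈ I * J) :
    w z < γ * δ := by
  refine Submodule.mul_induction_on hz (fun x hx y hy ↦ ?_) fun _ _ ↦ w.map_add_lt
  calc w (x * y) = w x * w y := w.map_mul x y
    _ < γ * δ := mul_lt_mul'' (hI x hx) (hJ y hy) zero_le zero_le

end Valuation

section VIdeal

variable {R K Γ₀ : Type*} [CommRing R] [Field K] [Algebra R K]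
  [LinearOrderedCommGroupWithZero Γ₀] {v : Valuation K Γ₀}
  {hv : ∀ r : R, v (algebraMap R K r) ≤ 1} {I J : Ideal R}

theorem IsVIdeal.mem_of_valuation_le (hI : IsVIdeal v hv I) {x y : R} (hx : x ∈ I)
    (hyx : v (algebraMap R K y) ≤ v (algebraMap R K x)) : y ∈ I := by
  obtain ⟨J, rfl⟩ := hI
  have hdvd : v.nonnegHom hv x ∣ v.nonnegHom hv y :=
    (Valuation.integer.integers v).dvd_of_le hyx
  exact J.mem_of_dvd hdvd hx

theorem IsVIdeal.valuation_lt_of_notMem (hI : IsVIdeal v hv I) {a x : R} (ha : a ∉ I)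
    (hx : x ∈ I) : v (algebraMap R K x) < v (algebraMap R K a) :=
  lt_of_not_ge fun hax ↦ ha (hI.mem_of_valuation_le hx hax)

theorem IsVIdeal.mul_notMem_mul (hI : IsVIdeal v hv I) (hJ : IsVIdeal v hv J) {a b : R}
    (ha : a ∉ I) (hb : b ∉ J) : a * b ∉ I * J := by
  let w : Valuation R Γ₀ := v.comap (algebraMap R K)
  intro hab
  have hlt : w (a * b) < w a * w b :=
    valuation_lt_mul_of_mem_mul (fun _ ↦ hI.valuation_lt_of_notMem ha)
      (fun _ ↦ hJ.valuation_lt_of_notMem hb) hab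
  exact hlt.ne (w.map_mul a b)

end VIdeal

theorem iInf_pow_vIdeal_prime_general {R K Γ₀ : Type*} [CommRing R] [Field K] [Algebra R K]
    [LinearOrderedCommGroupWithZero Γ₀] (v : Valuation K Γ₀)
    (hv : ∀ r : R, v (algebraMap R K r) ≤ 1) (I : Ideal R) (hproper : I ≠ ⊤)
    (hpow : ∃ᶠ n : ℕ in Filter.atTop, IsVIdeal v hv (I ^ n)) :
    (⨅ n : ℕ, I ^ (n + 1)).IsPrime := by
  have exists_vIdeal_pow_notMem {a : R} (ha : a ∉ ⨅ n : ℕ, I ^ (n + 1)) :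
      ∃ m, IsVIdeal v hv (I ^ m) ∧ a ∉ I ^ m := by
    obtain ⟨n, han⟩ : ∃ n, a ∉ I ^ (n + 1) := by simpa only [Ideal.mem_iInf, not_forall] using ha
    obtain ⟨m, hnm, hm⟩ := Filter.frequently_atTop.mp hpow (n + 1)
    exact ⟨m, hm, fun ham ↦ han (Ideal.pow_le_pow_right hnm ham)⟩
  have iInf_le_pow (n : ℕ) : (⨅ k : ℕ, I ^ (k + 1)) ≤ I ^ n :=
    (iInf_le _ n).trans (Ideal.pow_le_pow_right n.le_succ)
  refine ⟨ne_top_of_le_ne_top hproper ((iInf_le_pow 1).trans_eq (pow_one I)), fun {a b} hab ↦ ?_⟩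
  by_contra! hnot
  obtain ⟨m, hm, ham⟩ := exists_vIdeal_pow_notMem hnot.1
  obtain ⟨n, hn, hbn⟩ := exists_vIdeal_pow_notMem hnot.2
  have hab' : a * b ∈ I ^ m * I ^ n := pow_add I m n ▸ iInf_le_pow (m + n) hab
  exact hm.mul_notMem_mul hn ham hbn hab'

/-- If `I` is a proper ideal of `R` all of whose powers are `v`-ideals, then
`⋂ₙ Iⁿ` (intersection over `n ≥ 1`) is a prime ideal of `R`. -/
theorem iInf_pow_vIdeal_prime {R K Γ₀ : Type*} [CommRing R] [IsDomain R] [Field K]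
    [Algebra R K] [IsFractionRing R K] [LinearOrderedCommGroupWithZero Γ₀]
    (v : Valuation K Γ₀) (hv : ∀ r : R, v (algebraMap R K r) ≤ 1) (I : Ideal R)
    (hproper : I ≠ ⊤) (hpow : ∀ n : ℕ, 0 < n → IsVIdeal v hv (I ^ n)) :
    (⨅ n : ℕ, I ^ (n + 1)).IsPrime :=
  iInf_pow_vIdeal_prime_general v hv I hproper
    ((Filter.eventually_gt_atTop 0).mono hpow).frequently
end

section
/- Let R be a local integral domain with maximal ideal M and fraction field K. If every M-primary ideal of R is a valuation ideal, then the set of M-primary ideals of R is totally ordered by inclusion and the intersection of all M-primary ideals of R is a prime ideal of R. -/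
/-- An ideal `I` of `R` is a *valuation ideal* (with respect to the field `K` of
fractions of `R`) if there exist a valuation overring `V` of `R` in `K` and an ideal
`J` of `V` such that `I = J ∩ R`. -/
def IsValuationIdeal {R : Type*} (K : Type*) [CommRing R] [Field K] [Algebra R K]
    (I : Ideal R) : Prop :=
  ∃ (V : ValuationSubring K) (hV : ∀ s : R, algebraMap R K s ∈ V) (J : Ideal V),
    ∀ r : R, r ∈ I ↔ (⟨algebraMap R K r, hV r⟩ : V) ∈ J

/-!
If `v` is the valuation of the overring defining a valuation ideal `I`, then `x ∈ I` and
`v y ≤ v x` imply `y ∈ I`. Hence `I` is integrally closed (`y ^ (n + 1) ∈ I * (I + (y)) ^ n`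
forces `y ∈ I`), and `x * y ∈ I` forces `x ^ 2 ∈ I` or `y ^ 2 ∈ I`.

Suppose `a ∈ Q₁ \ Q₂` and `b ∈ Q₂ \ Q₁` for `M`-primary ideals `Q₁`, `Q₂`. The `M`-primary ideal
`(a * b) + (Q₁ ∩ Q₂) ^ 2` contains `a ^ 2` or `b ^ 2`. In the first case `a` is integral over `Q₂`,
so `a ∈ Q₂`; in the second `b ∈ Q₁`. Similarly, `x * y ∈ Q ^ 2` forces `x ∈ Q` or `y ∈ Q` for every
`M`-primary `Q`, whence the intersection of these ideals is prime.
-/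

section Valuation

variable {R Γ₀ : Type*} [CommRing R] [LinearOrderedCommMonoidWithZero Γ₀] {v : Valuation R Γ₀}
  {I J : Ideal R} {g g' : Γ₀}

theorem valuation_le_mul_of_mem_mul (hI : ∀ x ∈ I, v x ≤ g) (hJ : ∀ x ∈ J, v x ≤ g') {z : R}
    (hz : z ∈ I * J) : v z ≤ g * g' := by
  refine Submodule.mul_induction_on hz (fun x hx y hy => ?_) fun x y hx hy => v.map_add_le hx hy
  rw [map_mul]
  exact mul_le_mul' (hI x hx) (hJ y hy)

theorem valuation_lt_mul_of_mem_mul_s19 (hg' : 0 < g')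
    (hI : ∀ x ∈ I, v x < g) (hJ : ∀ x ∈ J, v x ≤ g') {z : R} (hz : z ∈ I * J) : v z < g * g' := by
  refine Submodule.mul_induction_on hz (fun x hx y hy => ?_) fun x y hx hy => v.map_add_lt hx hy
  rw [map_mul]
  exact mul_lt_mul_of_lt_of_le_of_nonneg_of_pos (hI x hx) (hJ y hy) zero_le hg'

theorem valuation_le_pow_of_mem_pow (hv : ∀ x, v x ≤ 1) (hI : ∀ x ∈ I, v x ≤ g) (n : ℕ) :
    ∀ z ∈ I ^ n, v z ≤ g ^ n := by
  induction n with
  | zero => simpa using hv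
  | succ n ih =>
    intro z hz
    rw [pow_succ] at hz ⊢
    exact valuation_le_mul_of_mem_mul ih hI hz

theorem valuation_le_of_mem_sup_span_singleton (hv : ∀ x, v x ≤ 1) {y : R}
    (hI : ∀ x ∈ I, v x ≤ v y) : ∀ z ∈ I ⊔ Ideal.span {y}, v z ≤ v y := by
  intro z hz
  rw [sup_comm] at hz
  obtain ⟨r, x, hx, rfl⟩ := Ideal.mem_span_singleton_sup.mp hz
  refine v.map_add_le ?_ (hI x hx)
  rw [map_mul]
  exact mul_le_of_le_one_left' (hv r)

end Valuation

namespace IsValuationIdeal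

variable {R K : Type*} [CommRing R] [Field K] [Algebra R K] {I : Ideal R}

theorem exists_valuation (hI : IsValuationIdeal K I) :
    ∃ (V : ValuationSubring K) (v : Valuation R V.ValueGroup),
      (∀ x, v x ≤ 1) ∧ ∀ ⦃x y⦄, x ∈ I → v y ≤ v x → y ∈ I := by
  obtain ⟨V, hV, J, hJ⟩ := hI
  refine ⟨V, V.valuation.comap (algebraMap R K), fun x => V.valuation_le_one ⟨_, hV x⟩, ?_⟩
  intro x y hx hyx
  obtain ⟨c, hc⟩ := (V.valuation_le_iff _ _).mp hyx
  have hy_eq : (⟨algebraMap R K y, hV y⟩ : V) = c * ⟨algebraMap R K x, hV x⟩ :=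
    Subtype.ext hc.symm
  rw [hJ, hy_eq]
  exact J.mul_mem_left c ((hJ x).mp hx)

theorem sq_mem_or_sq_mem (hI : IsValuationIdeal K I) {x y : R} (hxy : x * y ∈ I) :
    x ^ 2 ∈ I ∨ y ^ 2 ∈ I := by
  obtain ⟨V, v, -, hv⟩ := hI.exists_valuation
  rcases le_total (v x) (v y) with hle | hle
  · refine .inl (hv hxy ?_)
    rw [sq, map_mul, map_mul]
    gcongr
  · refine .inr (hv hxy ?_)
    rw [sq, map_mul, map_mul]
    gcongr

theorem mem_of_pow_succ_mem_mul_sup_span_pow (hI : IsValuationIdeal K I) {n : ℕ} {y : R}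
    (hy : y ^ (n + 1) ∈ I * (I ⊔ Ideal.span {y}) ^ n) : y ∈ I := by
  obtain ⟨V, v, hv_one, hv⟩ := hI.exists_valuation
  by_contra hyI
  have hlt : ∀ x ∈ I, v x < v y := fun x hx => lt_of_not_ge fun hyx => hyI (hv hx hyx)
  have hpos : 0 < v y := by simpa using hlt 0 I.zero_mem
  have hle : ∀ x ∈ I ⊔ Ideal.span {y}, v x ≤ v y :=
    valuation_le_of_mem_sup_span_singleton hv_one fun x hx => (hlt x hx).le
  have hself : v (y ^ (n + 1)) < v y * v y ^ n :=
    valuation_lt_mul_of_mem_mul_s19 (pow_pos hpos n) hlt (valuation_le_pow_of_mem_pow hv_one hle n) hy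
  rw [map_pow, pow_succ'] at hself
  exact hself.false

theorem mem_of_sq_mem_span_mul_sup_sq (hI : IsValuationIdeal K I) {x y : R} (hx : x ∈ I)
    (hy : y ^ 2 ∈ Ideal.span {x * y} ⊔ I ^ 2) : y ∈ I := by
  refine hI.mem_of_pow_succ_mem_mul_sup_span_pow (n := 1) (SetLike.le_def.mp (sup_le ?_ ?_) hy)
  · rw [Ideal.span_singleton_le_iff_mem, pow_one]
    exact Ideal.mul_mem_mul hx (Ideal.mem_sup_right (Ideal.mem_span_singleton_self y))
  · rw [sq, pow_one]
    exact Ideal.mul_mono_right le_sup_left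

theorem mem_of_sq_mem_sq (hI : IsValuationIdeal K I) {x : R} (hx : x ^ 2 ∈ I ^ 2) : x ∈ I :=
  hI.mem_of_sq_mem_span_mul_sup_sq I.zero_mem (Ideal.mem_sup_right hx)

theorem mem_or_mem_of_mul_mem_sq (hI : IsValuationIdeal K I) (hI_sq : IsValuationIdeal K (I ^ 2))
    {x y : R} (hxy : x * y ∈ I ^ 2) : x ∈ I ∨ y ∈ I :=
  (hI_sq.sq_mem_or_sq_mem hxy).imp hI.mem_of_sq_mem_sq hI.mem_of_sq_mem_sq

theorem le_or_le {Q₁ Q₂ : Ideal R} (hQ₁ : IsValuationIdeal K Q₁) (hQ₂ : IsValuationIdeal K Q₂)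
    (h : ∀ a ∈ Q₁, ∀ b ∈ Q₂, IsValuationIdeal K (Ideal.span {a * b} ⊔ (Q₁ ⊓ Q₂) ^ 2)) :
    Q₁ ≤ Q₂ ∨ Q₂ ≤ Q₁ := by
  by_contra! hnot
  obtain ⟨⟨a, ha, ha'⟩, b, hb, hb'⟩ := hnot.imp SetLike.not_le_iff_exists.mp
    SetLike.not_le_iff_exists.mp
  rcases (h a ha b hb).sq_mem_or_sq_mem
    (Ideal.mem_sup_left (Ideal.mem_span_singleton_self _)) with ha_sq | hb_sq
  · have hle : Ideal.span {a * b} ⊔ (Q₁ ⊓ Q₂) ^ 2 ≤ Ideal.span {b * a} ⊔ Q₂ ^ 2 := by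
      rw [mul_comm]
      gcongr
      exact inf_le_right
    exact ha' (hQ₂.mem_of_sq_mem_span_mul_sup_sq hb (hle ha_sq))
  · have hle : Ideal.span {a * b} ⊔ (Q₁ ⊓ Q₂) ^ 2 ≤ Ideal.span {a * b} ⊔ Q₁ ^ 2 := by
      gcongr
      exact inf_le_left
    exact hb' (hQ₁.mem_of_sq_mem_span_mul_sup_sq ha (hle hb_sq))

end IsValuationIdeal

section RadicalEq

variable {R : Type*} [CommRing R] {M : Ideal R}

theorem radical_inf_eq {I J : Ideal R} (hI : I.radical = M) (hJ : J.radical = M) :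
    (I ⊓ J).radical = M := by
  rw [Ideal.radical_inf, hI, hJ, inf_idem]

theorem radical_sup_eq {I J : Ideal R} (hI : I ≤ M) (hJ : J.radical = M) :
    (I ⊔ J).radical = M := by
  subst hJ
  exact le_antisymm (Ideal.radical_le_radical_iff.mpr (sup_le hI Ideal.le_radical))
    (Ideal.radical_mono le_sup_right)

theorem radical_sq_eq {I : Ideal R} (hI : I.radical = M) : (I ^ 2).radical = M :=
  (Ideal.radical_pow I two_ne_zero).trans hI

variable {K : Type*} [Field K] [Algebra R K]

theorem le_or_le_of_radical_eq (h : ∀ Q : Ideal R, Q.radical = M → IsValuationIdeal K Q)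
    {Q₁ Q₂ : Ideal R} (hQ₁ : Q₁.radical = M) (hQ₂ : Q₂.radical = M) : Q₁ ≤ Q₂ ∨ Q₂ ≤ Q₁ := by
  refine (h Q₁ hQ₁).le_or_le (h Q₂ hQ₂) fun a ha b _ => h _ (radical_sup_eq ?_ ?_)
  · rw [Ideal.span_singleton_le_iff_mem, ← hQ₁]
    exact Ideal.mul_mem_right b _ (Ideal.le_radical ha)
  · exact radical_sq_eq (radical_inf_eq hQ₁ hQ₂)

theorem isPrime_sInf_radical_eq [hM : M.IsPrime]
    (h : ∀ Q : Ideal R, Q.radical = M → IsValuationIdeal K Q) :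
    (sInf {Q : Ideal R | Q.radical = M}).IsPrime := by
  refine ⟨ne_top_of_le_ne_top hM.ne_top (sInf_le hM.radical), fun {x y} hxy => ?_⟩
  by_contra! hnot
  simp only [Ideal.mem_sInf, Set.mem_ofPred_eq, not_forall] at hxy hnot
  obtain ⟨⟨P, hP, hx⟩, Q, hQ, hy⟩ := hnot
  have hPQ : (P ⊓ Q).radical = M := radical_inf_eq hP hQ
  have hPQ_sq : ((P ⊓ Q) ^ 2).radical = M := radical_sq_eq hPQ
  rcases (h _ hPQ).mem_or_mem_of_mul_mem_sq (h _ hPQ_sq) (hxy hPQ_sq) with hx' | hy'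
  · exact hx hx'.1
  · exact hy hy'.2

end RadicalEq

theorem primary_valuation_ideals_totally_ordered_general {R K : Type*} [CommRing R] [Field K]
    [Algebra R K] (M : Ideal R) [hM : M.IsMaximal]
    (h : ∀ Q : Ideal R, Q.IsPrimary → Q.radical = M → IsValuationIdeal K Q) :
    (∀ Q₁ Q₂ : Ideal R, Q₁.IsPrimary → Q₁.radical = M → Q₂.IsPrimary → Q₂.radical = M →
        Q₁ ≤ Q₂ ∨ Q₂ ≤ Q₁) ∧
    (sInf {Q : Ideal R | Q.IsPrimary ∧ Q.radical = M}).IsPrime := by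
  have isPrimary : ∀ Q : Ideal R, Q.radical = M → Q.IsPrimary := fun Q hQ =>
    Ideal.isPrimary_of_isMaximal_radical (hQ ▸ hM)
  have isValuationIdeal : ∀ Q : Ideal R, Q.radical = M → IsValuationIdeal K Q := fun Q hQ =>
    h Q (isPrimary Q hQ) hQ
  have setOf_eq : {Q : Ideal R | Q.IsPrimary ∧ Q.radical = M} = {Q | Q.radical = M} :=
    Set.ext fun Q => and_iff_right_of_imp (isPrimary Q)
  rw [setOf_eq]
  exact ⟨fun Q₁ Q₂ _ hQ₁ _ hQ₂ => le_or_le_of_radical_eq isValuationIdeal hQ₁ hQ₂,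
    isPrime_sInf_radical_eq isValuationIdeal⟩

/-- Let `R` be a local integral domain with maximal ideal `M` and fraction field `K`.
If every `M`-primary ideal of `R` is a valuation ideal, then the set of `M`-primary
ideals is totally ordered by inclusion and their intersection is a prime ideal. -/
theorem primary_valuation_ideals_totally_ordered {R K : Type*} [CommRing R] [IsDomain R]
    [IsLocalRing R] [Field K] [Algebra R K] [IsFractionRing R K]
    (h : ∀ Q : Ideal R, Q.IsPrimary → Q.radical = IsLocalRing.maximalIdeal R →
      IsValuationIdeal K Q) :
    (∀ Q₁ Q₂ : Ideal R,
        Q₁.IsPrimary → Q₁.radical = IsLocalRing.maximalIdeal R →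
        Q₂.IsPrimary → Q₂.radical = IsLocalRing.maximalIdeal R →
        Q₁ ≤ Q₂ ∨ Q₂ ≤ Q₁) ∧
    (sInf {Q : Ideal R |
        Q.IsPrimary ∧ Q.radical = IsLocalRing.maximalIdeal R}).IsPrime :=
  primary_valuation_ideals_totally_ordered_general (IsLocalRing.maximalIdeal R) h
end
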